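/- arXiv:0911.0533 — 3 statements merged into one kernel-verified Lean document; each statement's English description precedes it below -/
import Mathlib

section
/- Let α > 0 be real. For every z in the unit disk E with |z| = r < 1, Re(1 + 2 ∑_{k=1}^∞ (α/(α+k)) zᵏ) ≥ 1 + 2 ∑_{k=1}^∞ (α/(α+k)) (−r)ᵏ. -/
open Complex Metric

/-!
The coefficients are moments: `α / (α + k) = ∫₀¹ (u ^ α⁻¹) ^ k du`. Summing a geometric series under
the integral sign writes a power series with moment coefficients as an average of `1 / (1 - X z)`,
with `X` valued in `[0, 1]`, and `Re (1 / (1 - w)) ≥ 1 / (1 + |w|)` for every `w` in the unit disk,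
so that replacing each `X z` by `-X |z|` can only lower the real part of the average.
-/

section

open MeasureTheory ProbabilityTheory

lemma inv_one_add_norm_le_re_inv_one_sub {w : ℂ} (hw : ‖w‖ < 1) :
    (1 + ‖w‖)⁻¹ ≤ ((1 - w)⁻¹).re := by
  have h_re_ge : -‖w‖ ≤ w.re := (abs_le.1 (abs_re_le_norm w)).1
  have h_re_lt : w.re < 1 := (re_le_norm w).trans_lt hw
  have h_normSq : normSq (1 - w) = 1 - 2 * w.re + ‖w‖ ^ 2 := by
    rw [← normSq_eq_norm_sq, normSq_apply, normSq_apply, sub_re, sub_im, one_re, one_im]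
    ring
  have h_pos : 0 < normSq (1 - w) :=
    normSq_pos.2 fun h ↦ h_re_lt.ne (by simp [← sub_eq_zero.1 h])
  rw [inv_re, inv_eq_one_div, div_le_div_iff₀ (by positivity) h_pos, h_normSq, sub_re, one_re,
    ← sub_nonneg]
  calc 0 ≤ (1 - ‖w‖) * (w.re + ‖w‖) := mul_nonneg (by linarith) (by linarith)
    _ = (1 - w.re) * (1 + ‖w‖) - 1 * (1 - 2 * w.re + ‖w‖ ^ 2) := by ring

lemma norm_smul_le_of_abs_le_one {E : Type*} [SeminormedAddCommGroup E] [NormedSpace ℝ E]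
    {t : ℝ} (ht : |t| ≤ 1) (x : E) : ‖t • x‖ ≤ ‖x‖ := by
  rw [norm_smul]
  exact mul_le_of_le_one_left (norm_nonneg x) ht

lemma norm_inv_one_sub_le {𝕜 : Type*} [NormedDivisionRing 𝕜] {w : 𝕜} {r : ℝ}
    (hw : ‖w‖ ≤ r) (hr : r < 1) : ‖(1 - w)⁻¹‖ ≤ (1 - r)⁻¹ := by
  have h_sub : 1 - ‖w‖ ≤ ‖1 - w‖ := by simpa using norm_sub_norm_le 1 w
  rw [norm_inv]
  exact inv_anti₀ (by linarith) (by linarith)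

section Moment

variable {Ω : Type*} [MeasurableSpace Ω] {μ : Measure Ω} [IsFiniteMeasure μ] {X : Ω → ℝ}

section NormedDivisionRing

variable {𝕜 : Type*} [NormedDivisionRing 𝕜] [NormedAlgebra ℝ 𝕜] {z : 𝕜}

lemma hasSum_moment_smul_pow [CompleteSpace 𝕜] (hX : AEMeasurable X μ)
    (hX_le : ∀ᵐ ω ∂μ, |X ω| ≤ 1) (hz : ‖z‖ < 1) :
    HasSum (fun k : ℕ ↦ moment X k μ • z ^ k) (∫ ω, (1 - X ω • z)⁻¹ ∂μ) := by
  have h_geometric : HasSum (fun k : ℕ ↦ ∫ ω, (X ω • z) ^ k ∂μ) (∫ ω, (1 - X ω • z)⁻¹ ∂μ) := by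
    refine hasSum_integral_of_dominated_convergence (fun k _ ↦ ‖z‖ ^ k) (fun k ↦ ?_) (fun k ↦ ?_)
      (.of_forall fun _ ↦ summable_geometric_of_lt_one (norm_nonneg z) hz)
      (integrable_const _) ?_
    · exact (hX.aestronglyMeasurable.smul_const z).pow k
    · filter_upwards [hX_le] with ω hω
      rw [norm_pow]
      exact pow_le_pow_left₀ (norm_nonneg _) (norm_smul_le_of_abs_le_one hω z) k
    · filter_upwards [hX_le] with ω hω
      exact hasSum_geometric_of_norm_lt_one ((norm_smul_le_of_abs_le_one hω z).trans_lt hz)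
  simpa only [smul_pow, integral_smul_const, moment, Pi.pow_apply] using h_geometric

lemma integrable_inv_one_sub_smul (hX : AEMeasurable X μ)
    (hX_le : ∀ᵐ ω ∂μ, |X ω| ≤ 1) (hz : ‖z‖ < 1) :
    Integrable (fun ω ↦ (1 - X ω • z)⁻¹) μ := by
  refine .of_bound ?_ (1 - ‖z‖)⁻¹ ?_
  · exact (aestronglyMeasurable_const.sub (hX.aestronglyMeasurable.smul_const z)).inv₀
  · filter_upwards [hX_le] with ω hω
    exact norm_inv_one_sub_le (norm_smul_le_of_abs_le_one hω z) hz

end NormedDivisionRing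

theorem tsum_moment_mul_neg_norm_pow_le_re_tsum {z : ℂ} (hX : AEMeasurable X μ)
    (hX_mem : ∀ᵐ ω ∂μ, X ω ∈ Set.Icc 0 1) (hz : ‖z‖ < 1) :
    ∑' k : ℕ, moment X k μ * (-‖z‖) ^ k ≤ (∑' k : ℕ, (moment X k μ : ℂ) * z ^ k).re := by
  have hX_le : ∀ᵐ ω ∂μ, |X ω| ≤ 1 := by
    filter_upwards [hX_mem] with ω hω using abs_le.2 ⟨by linarith [hω.1], hω.2⟩
  have hz_neg : ‖-‖z‖‖ < 1 := by simpa using hz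
  simp only [← smul_eq_mul (a := moment X _ μ), ← Complex.real_smul]
  rw [(hasSum_moment_smul_pow hX hX_le hz_neg).tsum_eq,
    (hasSum_moment_smul_pow hX hX_le hz).tsum_eq]
  calc ∫ ω, (1 - X ω • -‖z‖)⁻¹ ∂μ ≤ ∫ ω, ((1 - X ω • z)⁻¹).re ∂μ := by
        refine integral_mono_ae (integrable_inv_one_sub_smul hX hX_le hz_neg)
          (integrable_inv_one_sub_smul hX hX_le hz).re ?_
        filter_upwards [hX_mem, hX_le] with ω hω hω_le
        have h_kernel := inv_one_add_norm_le_re_inv_one_sub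
          ((norm_smul_le_of_abs_le_one hω_le z).trans_lt hz)
        rwa [norm_smul, Real.norm_of_nonneg hω.1, ← sub_neg_eq_add, ← mul_neg] at h_kernel
    _ = (∫ ω, (1 - X ω • z)⁻¹ ∂μ).re := integral_re (integrable_inv_one_sub_smul hX hX_le hz)

end Moment

section Coefficients

variable {α : ℝ}

lemma ae_rpow_inv_mem_Icc (hα : 0 ≤ α) :
    ∀ᵐ u ∂volume.restrict (Set.Ioc (0 : ℝ) 1), u ^ α⁻¹ ∈ Set.Icc 0 1 :=
  ae_restrict_of_forall_mem measurableSet_Ioc fun _ hu ↦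
    ⟨Real.rpow_nonneg hu.1.le _, Real.rpow_le_one hu.1.le hu.2 (inv_nonneg.2 hα)⟩

lemma moment_rpow_inv (hα : 0 < α) (k : ℕ) :
    moment (fun u : ℝ ↦ u ^ α⁻¹) k (volume.restrict (Set.Ioc 0 1)) = α / (α + k) := by
  have h_exp : 0 < α⁻¹ * k + 1 := by positivity
  calc ∫ u in Set.Ioc (0 : ℝ) 1, (u ^ α⁻¹) ^ k
      = ∫ u in (0 : ℝ)..1, u ^ (α⁻¹ * k) := by
        rw [intervalIntegral.integral_of_le zero_le_one]
        exact setIntegral_congr_fun measurableSet_Ioc fun u hu ↦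
          (Real.rpow_mul_natCast hu.1.le _ _).symm
    _ = (α⁻¹ * k + 1)⁻¹ := by
        rw [integral_rpow (.inl (by linarith)), Real.one_rpow, Real.zero_rpow h_exp.ne', sub_zero,
          one_div]
    _ = α / (α + k) := by field_simp; ring

theorem tsum_div_add_mul_neg_norm_pow_le_re_tsum (hα : 0 < α) {z : ℂ} (hz : ‖z‖ < 1) :
    ∑' k : ℕ, α / (α + k) * (-‖z‖) ^ k ≤ (∑' k : ℕ, ((α / (α + k) : ℝ) : ℂ) * z ^ k).re := by
  have h_meas : Measurable fun u : ℝ ↦ u ^ α⁻¹ := by fun_prop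
  simpa only [moment_rpow_inv hα] using tsum_moment_mul_neg_norm_pow_le_re_tsum
    h_meas.aemeasurable (ae_rpow_inv_mem_Icc hα.le) hz

lemma summable_div_add_smul_pow {𝕜 : Type*} [NormedDivisionRing 𝕜] [NormedSpace ℝ 𝕜]
    [CompleteSpace 𝕜] (hα : 0 ≤ α) {z : 𝕜} (hz : ‖z‖ < 1) :
    Summable fun k : ℕ ↦ (α / (α + k)) • z ^ k := by
  refine .of_norm_bounded (summable_geometric_of_lt_one (norm_nonneg z) hz) fun k ↦ ?_
  have h_coeff : |α / (α + k)| ≤ 1 := by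
    rw [abs_of_nonneg (by positivity)]
    exact div_le_one_of_le₀ (by simp) (by positivity)
  simpa only [norm_pow] using norm_smul_le_of_abs_le_one h_coeff (z ^ k)

lemma tsum_div_add_smul_pow_eq_one_add {𝕜 : Type*} [NormedDivisionRing 𝕜] [NormedSpace ℝ 𝕜]
    [CompleteSpace 𝕜] (hα : 0 < α) {z : 𝕜} (hz : ‖z‖ < 1) :
    ∑' k : ℕ, (α / (α + k)) • z ^ k = 1 + ∑' k : ℕ, (α / (α + k + 1)) • z ^ (k + 1) := by
  rw [(summable_div_add_smul_pow hα.le hz).tsum_eq_zero_add]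
  simp [hα.ne', add_assoc]

end Coefficients

end

/-- For `|z| = r < 1`,
`Re(1 + 2 ∑_{k=1}^∞ (α/(α+k)) zᵏ) ≥ 1 + 2 ∑_{k=1}^∞ (α/(α+k)) (−r)ᵏ`. -/
theorem re_series_lower_bound (α : ℝ) (hα : 0 < α) :
    ∀ z ∈ ball (0 : ℂ) 1,
      (1 + 2 * ∑' k : ℕ, ((α / (α + (k : ℝ) + 1) : ℝ) : ℂ) * z ^ (k + 1)).re ≥
      1 + 2 * ∑' k : ℕ, (α / (α + (k : ℝ) + 1)) * (-‖z‖) ^ (k + 1) := by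
  intro z hz_mem
  have hz : ‖z‖ < 1 := mem_ball_zero_iff.1 hz_mem
  have h_le := tsum_div_add_mul_neg_norm_pow_le_re_tsum hα hz
  have h_complex := tsum_div_add_smul_pow_eq_one_add hα hz
  have h_real := tsum_div_add_smul_pow_eq_one_add hα (z := -‖z‖) (by simpa using hz)
  simp only [Complex.real_smul] at h_complex
  simp only [smul_eq_mul] at h_real
  rw [h_complex, h_real, add_re, one_re] at h_le
  simp only [ge_iff_le, add_re, one_re, mul_re, re_ofNat, im_ofNat, zero_mul, sub_zero]
  linarith
end

section
/- Let 0 ≤ β < 1 and n ∈ ℕ. If f ∈ A satisfies Re((Dⁿ⁺¹f)(z)/z) > β for all z ∈ E \ {0}, then Re((Dⁿf)(z)/z) > 2(1−β)·ln 2 + 2β − 1 for all z ∈ E \ {0}. (Corollary 1: T_{n+1}¹(β) ⊆ T_n¹(2(1−β)ln 2 + 2β − 1).) -/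
open Complex Metric

/-- The Salagean derivative operator: `(Dg)(z) = z * g'(z)`. -/
noncomputable def salagean (g : ℂ → ℂ) : ℂ → ℂ := fun z => z * deriv g z

/-!
Put `g = Dⁿf`, so that `(Dⁿ⁺¹f)(z)/z = g'(z)`. On the circle about `0` through `z` the harmonic
function `Re g'` has a minimum `m > β`, and Harnack's inequality on the disk it bounds gives
`Re g'(tz) - m ≥ (1 - t)/(1 + t) * (Re g'(0) - m)` for `0 ≤ t < 1`. Since `g(z)/z` is the integral
of `g'(tz)` over `[0, 1]` and `(1 - t)/(1 + t)` integrates to `2 log 2 - 1 < 1`, the bound holds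
with `m` in place of `β`, hence strictly with `β`.
-/

open InnerProductSpace Set

section Harnack

variable {u : ℂ → ℝ} {c w z : ℂ} {R m t : ℝ}

lemma harnack_lower_bound (hu : HarmonicContOnCl u (ball c R))
    (hu0 : ∀ ζ ∈ sphere c R, 0 ≤ u ζ) (hw : w ∈ ball c R) :
    (R - ‖w - c‖) / (R + ‖w - c‖) * u c ≤ u w := by
  have hR : |R| = R := abs_of_pos (pos_of_mem_ball hw)
  have hu_cont : ContinuousOn u (sphere c |R|) :=
    hu.continuousOn_ball.mono (hR.symm ▸ sphere_subset_closedBall)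
  have hkernel_cont : ContinuousOn (re ∘ herglotzRieszKernel c w) (sphere c |R|) :=
    continuous_re.comp_continuousOn (continuousOn_herglotzRieszKernel_sphere hw)
  calc (R - ‖w - c‖) / (R + ‖w - c‖) * u c
      = Real.circleAverage (((R - ‖w - c‖) / (R + ‖w - c‖)) • u) c R := by
        rw [Real.circleAverage_smul, smul_eq_mul,
          InnerProductSpace.HarmonicContOnCl.circleAverage_eq (hR.symm ▸ hu)]
    _ ≤ Real.circleAverage ((re ∘ herglotzRieszKernel c w) • u) c R := by
        refine Real.circleAverage_mono (hu_cont.const_smul _).circleIntegrable'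
          (hkernel_cont.smul hu_cont).circleIntegrable' fun ζ hζ => ?_
        rw [hR] at hζ
        exact mul_le_mul_of_nonneg_right (le_re_herglotzRieszKernel hζ hw) (hu0 ζ hζ)
    _ = u w := hu.circleAverage_re_herglotzRieszKernel_smul hw

lemma norm_radial_sub (ht : 0 ≤ t) : ‖c + t * (z - c) - c‖ = t * ‖z - c‖ := by
  rw [add_sub_cancel_left, norm_mul, norm_real, Real.norm_of_nonneg ht]

lemma harnack_lower_bound_radial (hu : HarmonicContOnCl u (ball c ‖z - c‖))
    (hm : ∀ ζ ∈ sphere c ‖z - c‖, m ≤ u ζ) (hz : z ≠ c) (ht : t ∈ Ico (0 : ℝ) 1) :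
    m + (u c - m) * ((1 - t) / (1 + t)) ≤ u (c + t * (z - c)) := by
  have hR : 0 < ‖z - c‖ := norm_sub_pos_iff.mpr hz
  have hnorm := norm_radial_sub (c := c) (z := z) ht.1
  have hmem : c + t * (z - c) ∈ ball c ‖z - c‖ := by
    rw [mem_ball_iff_norm, hnorm]
    exact mul_lt_of_lt_one_left hR ht.2
  have hratio : (‖z - c‖ - t * ‖z - c‖) / (‖z - c‖ + t * ‖z - c‖) = (1 - t) / (1 + t) := by
    rw [← one_sub_mul, ← one_add_mul, mul_div_mul_right _ _ hR.ne']
  have key := harnack_lower_bound (hu.sub harmonicContOnCl_const)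
    (fun ζ hζ => sub_nonneg.mpr (hm ζ hζ)) hmem
  simp only [hnorm, hratio, Pi.sub_apply] at key
  linarith

end Harnack

section RadialIntegration

variable {g : ℂ → ℂ} {c z : ℂ} {m t : ℝ}

lemma hasDerivAt_two_mul_log_one_add_sub (ht : 1 + t ≠ 0) :
    HasDerivAt (fun s => 2 * Real.log (1 + s) - s) ((1 - t) / (1 + t)) t := by
  have hlog := ((hasDerivAt_id t).const_add 1).log ht
  refine ((hlog.const_mul 2).sub (hasDerivAt_id t)).congr_deriv ?_
  simp only [id_eq]
  field_simp
  ring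

lemma hasDerivAt_re_radial_quotient (hg : DifferentiableAt ℂ g (c + t * (z - c))) (hz : z ≠ c) :
    HasDerivAt (fun s : ℝ => ((g (c + s * (z - c)) - g c) / (z - c)).re)
      (deriv g (c + t * (z - c))).re t := by
  have hpath : HasDerivAt (fun s : ℂ => c + s * (z - c)) (z - c) t := by
    simpa using ((hasDerivAt_id (t : ℂ)).mul_const (z - c)).const_add c
  have hquot := ((hg.hasDerivAt.comp (t : ℂ) hpath).sub_const (g c)).div_const (z - c)
  rw [mul_div_cancel_right₀ _ (sub_ne_zero.mpr hz)] at hquot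
  exact hquot.real_of_complex

lemma le_re_quotient_of_le_re_deriv (hg : AnalyticOnNhd ℂ g (closedBall c ‖z - c‖)) (hz : z ≠ c)
    (hm : ∀ ζ ∈ sphere c ‖z - c‖, m ≤ (deriv g ζ).re) :
    m + ((deriv g c).re - m) * (2 * Real.log 2 - 1) ≤ ((g z - g c) / (z - c)).re := by
  have hharm : HarmonicContOnCl (fun ζ => (deriv g ζ).re) (ball c ‖z - c‖) :=
    HarmonicOnNhd.harmonicContOnCl fun ζ hζ =>
      (hg.deriv ζ (closure_ball_subset_closedBall hζ)).harmonicAt_re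
  have hradius : ∀ t ∈ Icc (0 : ℝ) 1, c + t * (z - c) ∈ closedBall c ‖z - c‖ := fun t ht => by
    rw [mem_closedBall_iff_norm, norm_radial_sub ht.1]
    exact mul_le_of_le_one_left (norm_nonneg _) ht.2
  have hquot : ∀ t ∈ Icc (0 : ℝ) 1, HasDerivAt
      (fun s : ℝ => ((g (c + s * (z - c)) - g c) / (z - c)).re)
      (deriv g (c + t * (z - c))).re t := fun t ht =>
    hasDerivAt_re_radial_quotient (hg _ (hradius t ht)).differentiableAt hz
  have hlower : ∀ t ∈ Icc (0 : ℝ) 1, HasDerivAt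
      (fun s => m * s + ((deriv g c).re - m) * (2 * Real.log (1 + s) - s))
      (m + ((deriv g c).re - m) * ((1 - t) / (1 + t))) t := fun t ht =>
    (hasDerivAt_const_mul m).add
      ((hasDerivAt_two_mul_log_one_add_sub (by linarith [ht.1])).const_mul _)
  have key := image_le_of_deriv_right_le_deriv_boundary
    (fun t ht => (hlower t ht).continuousAt.continuousWithinAt)
    (fun t ht => (hlower t (Ico_subset_Icc_self ht)).hasDerivWithinAt)
    (by simp)
    (fun t ht => (hquot t ht).continuousAt.continuousWithinAt)
    (fun t ht => (hquot t (Ico_subset_Icc_self ht)).hasDerivWithinAt)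
    (fun t ht => harnack_lower_bound_radial hharm hm hz ht)
    (right_mem_Icc.mpr zero_le_one)
  simpa [one_add_one_eq_two] using key

lemma lt_re_quotient_of_lt_re_deriv (hg : AnalyticOnNhd ℂ g (closedBall c ‖z - c‖)) (hz : z ≠ c)
    (hm : ∀ ζ ∈ sphere c ‖z - c‖, m < (deriv g ζ).re) :
    m + ((deriv g c).re - m) * (2 * Real.log 2 - 1) < ((g z - g c) / (z - c)).re := by
  have hcont : ContinuousOn (fun ζ => (deriv g ζ).re) (sphere c ‖z - c‖) :=
    continuous_re.comp_continuousOn (hg.deriv.continuousOn.mono sphere_subset_closedBall)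
  obtain ⟨ζ, hζ, hmin⟩ := (isCompact_sphere c ‖z - c‖).exists_isMinOn
    ⟨z, mem_sphere_iff_norm.mpr rfl⟩ hcont
  have hlog : Real.log 2 < 1 := Real.log_two_lt_d9.trans (by norm_num)
  refine lt_of_lt_of_le ?_ (le_re_quotient_of_le_re_deriv hg hz fun ξ hξ => hmin hξ)
  linarith [mul_pos (sub_pos.mpr (hm ζ hζ)) (sub_pos.mpr hlog)]

end RadialIntegration

section Salagean

variable {f g : ℂ → ℂ} {s : Set ℂ} {z : ℂ}

lemma salagean_div_self (g : ℂ → ℂ) (hz : z ≠ 0) : salagean g z / z = deriv g z :=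
  mul_div_cancel_left₀ _ hz

lemma analyticOnNhd_iterate_salagean (hf : AnalyticOnNhd ℂ f s) (n : ℕ) :
    AnalyticOnNhd ℂ (salagean^[n] f) s := by
  induction n with
  | zero => exact hf
  | succ n ih =>
    rw [Function.iterate_succ_apply']
    exact analyticOnNhd_id.mul ih.deriv

lemma iterate_salagean_zero (hf0 : f 0 = 0) (n : ℕ) : salagean^[n] f 0 = 0 := by
  cases n with
  | zero => exact hf0
  | succ n => rw [Function.iterate_succ_apply', salagean, zero_mul]

lemma deriv_salagean_zero (hg : AnalyticAt ℂ g 0) : deriv (salagean g) 0 = deriv g 0 := by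
  have hprod : HasDerivAt (salagean g) (1 * deriv g 0 + 0 * deriv (deriv g) 0) 0 :=
    (hasDerivAt_id (0 : ℂ)).mul hg.deriv.differentiableAt.hasDerivAt
  rw [hprod.deriv, one_mul, zero_mul, add_zero]

lemma deriv_iterate_salagean_zero (hf : AnalyticAt ℂ f 0) (n : ℕ) :
    deriv (salagean^[n] f) 0 = deriv f 0 := by
  induction n with
  | zero => rfl
  | succ n ih =>
    have hfn : AnalyticOnNhd ℂ (salagean^[n] f) {0} :=
      analyticOnNhd_iterate_salagean (fun _ hz => hz ▸ hf) n
    rw [Function.iterate_succ_apply', deriv_salagean_zero (hfn 0 rfl), ih]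

end Salagean

theorem inclusion_alpha_one_general {R : ℝ} (β : ℝ) (n : ℕ) (f : ℂ → ℂ)
    (hf : AnalyticOnNhd ℂ f (ball (0 : ℂ) R)) (hf0 : f 0 = 0)
    (h : ∀ z ∈ ball (0 : ℂ) R \ {0}, β < (salagean^[n + 1] f z / z).re) :
    ∀ z ∈ ball (0 : ℂ) R \ {0},
      2 * ((deriv f 0).re - β) * Real.log 2 + 2 * β - (deriv f 0).re
        < (salagean^[n] f z / z).re := by
  rintro z ⟨hzR, hz⟩
  have hsub : closedBall (0 : ℂ) ‖z - 0‖ ⊆ ball 0 R :=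
    closedBall_subset_ball (mem_ball_iff_norm.mp hzR)
  have hsphere : ∀ ζ ∈ sphere (0 : ℂ) ‖z - 0‖, β < (deriv (salagean^[n] f) ζ).re := by
    intro ζ hζ
    have hζ0 : ζ ≠ 0 := ne_of_mem_sphere hζ (norm_sub_pos_iff.mpr hz).ne'
    rw [← salagean_div_self _ hζ0, ← Function.iterate_succ_apply' salagean]
    exact h ζ ⟨hsub (sphere_subset_closedBall hζ), hζ0⟩
  have hf_zero : AnalyticAt ℂ f 0 := hf 0 (mem_ball_self (pos_of_mem_ball hzR))
  have key := lt_re_quotient_of_lt_re_deriv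
    ((analyticOnNhd_iterate_salagean hf n).mono hsub) hz hsphere
  rw [deriv_iterate_salagean_zero hf_zero, iterate_salagean_zero hf0, sub_zero, sub_zero] at key
  linarith

/-- Corollary 1: `T_{n+1}¹(β) ⊆ T_n¹(2(1−β)ln 2 + 2β − 1)`. -/
theorem inclusion_alpha_one (β : ℝ) (hβ0 : 0 ≤ β) (hβ1 : β < 1) (n : ℕ)
    (f : ℂ → ℂ) (hf : AnalyticOnNhd ℂ f (ball (0 : ℂ) 1))
    (hf0 : f 0 = 0) (hf1 : deriv f 0 = 1)
    (h : ∀ z ∈ ball (0 : ℂ) 1 \ {0}, β < (salagean^[n + 1] f z / z).re) :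
    ∀ z ∈ ball (0 : ℂ) 1 \ {0},
      2 * (1 - β) * Real.log 2 + 2 * β - 1 < (salagean^[n] f z / z).re := by
  simpa only [hf1, one_re] using inclusion_alpha_one_general β n f hf hf0 h
end

section
/- Let 0 ≤ β < 1 and let f be analytic on the unit disk E with f(0) = 0 and f′(0) = 1. If Re f′(z) > β for all z ∈ E, then Re(f(z)/z) > 2(1−β)·ln 2 + 2β − 1 for all z ∈ E \ {0}. -/
open Complex Metric

/-!
If `Re f' > β` on the disk `ball c R`, then `Re f' - β` is a positive harmonic function, so
Harnack's inequality bounds it below at distance `ρ` from the centre by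
`(R - ρ) / (R + ρ) * (Re f'(c) - β)`. The quotient `(f w - f c) / (w - c)` is the mean of `f'` over
the segment from `c` to `w`; integrating the Harnack bound along it yields
`β + (Re f'(c) - β) * (2 * log (1 + s) / s - 1)` with `s = ‖w - c‖ / R < 1`, and strict concavity of
the logarithm gives `log (1 + s) > s * log 2`.
-/

section Harnack

open InnerProductSpace Filter Topology

variable {c w : ℂ} {R : ℝ} {u : ℂ → ℝ}

theorem le_poissonKernel {z : ℂ} (hz : z ∈ sphere c R) (hw : w ∈ ball c R) :
    (R - ‖w - c‖) / (R + ‖w - c‖) ≤ poissonKernel c w z := by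
  rw [poissonKernel_eq_re_herglotzRieszKernel]
  exact le_re_herglotzRieszKernel hz hw

theorem continuousOn_poissonKernel_sphere (hw : w ∈ ball c R) :
    ContinuousOn (poissonKernel c w) (sphere c |R|) := by
  rw [poissonKernel_eq_re_herglotzRieszKernel]
  exact continuous_re.comp_continuousOn (continuousOn_herglotzRieszKernel_sphere hw)

theorem harnack_lower_closedBall (hu : HarmonicOnNhd u (closedBall c R))
    (hu_nonneg : ∀ z ∈ sphere c R, 0 ≤ u z) (hw : w ∈ ball c R) :
    (R - ‖w - c‖) / (R + ‖w - c‖) * u c ≤ u w := by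
  have hR : |R| = R := abs_of_pos (pos_of_mem_ball hw)
  have hu_cont : ContinuousOn u (sphere c |R|) :=
    hu.continuousOn.mono (hR.symm ▸ sphere_subset_closedBall)
  calc (R - ‖w - c‖) / (R + ‖w - c‖) * u c
      = Real.circleAverage (((R - ‖w - c‖) / (R + ‖w - c‖)) • u) c R := by
        rw [Real.circleAverage_smul, InnerProductSpace.HarmonicOnNhd.circleAverage_eq (by rwa [hR]),
          smul_eq_mul]
    _ ≤ Real.circleAverage (poissonKernel c w • u) c R := by
        refine Real.circleAverage_mono (hu_cont.const_smul _).circleIntegrable'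
          ((continuousOn_poissonKernel_sphere hw).smul hu_cont).circleIntegrable' fun z hz ↦ ?_
        rw [hR] at hz
        exact mul_le_mul_of_nonneg_right (le_poissonKernel hz hw) (hu_nonneg z hz)
    _ = u w := hu.circleAverage_poissonKernel_smul hw

theorem harnack_lower_ball (hu : HarmonicOnNhd u (ball c R))
    (hu_nonneg : ∀ z ∈ ball c R, 0 ≤ u z) (hw : w ∈ ball c R) :
    (R - ‖w - c‖) / (R + ‖w - c‖) * u c ≤ u w := by
  have hden : R + ‖w - c‖ ≠ 0 :=
    (add_pos_of_pos_of_nonneg (pos_of_mem_ball hw) (norm_nonneg _)).ne'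
  have htendsto : Tendsto (fun ρ ↦ (ρ - ‖w - c‖) / (ρ + ‖w - c‖) * u c) (𝓝[<] R)
      (𝓝 ((R - ‖w - c‖) / (R + ‖w - c‖) * u c)) :=
    ContinuousAt.continuousWithinAt (by fun_prop (disch := exact hden))
  refine le_of_tendsto htendsto ?_
  filter_upwards [Ioo_mem_nhdsLT (mem_ball_iff_norm.mp hw)] with ρ hρ
  exact harnack_lower_closedBall (hu.mono (closedBall_subset_ball hρ.2))
    (fun z hz ↦ hu_nonneg z (sphere_subset_ball hρ.2 hz)) (mem_ball_iff_norm.mpr hρ.1)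

theorem harnack_lower_re {F : ℂ → ℂ} {β : ℝ} (hF : DifferentiableOn ℂ F (ball c R))
    (hβ : ∀ z ∈ ball c R, β ≤ (F z).re) (hw : w ∈ ball c R) :
    β + ((F c).re - β) * ((R - ‖w - c‖) / (R + ‖w - c‖)) ≤ (F w).re := by
  have hharm : HarmonicOnNhd (fun z ↦ (F z - β).re) (ball c R) := fun z hz ↦
    ((hF.sub_const (β : ℂ)).analyticAt (isOpen_ball.mem_nhds hz)).harmonicAt_re
  have hharnack := harnack_lower_ball hharm (fun z hz ↦ by simpa using hβ z hz) hw
  simp only [sub_re, ofReal_re] at hharnack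
  linarith

end Harnack

section SegmentMean

open intervalIntegral Set

variable {E : Type*} [NormedAddCommGroup E] [NormedSpace ℂ E] [CompleteSpace E] {U : Set ℂ}
  {c w : ℂ}

theorem continuousOn_deriv_segment {f : ℂ → E} (hU : IsOpen U) (hUc : StarConvex ℝ c U)
    (hf : DifferentiableOn ℂ f U) (hw : w ∈ U) :
    ContinuousOn (fun t : ℝ ↦ deriv f (c + t • (w - c))) (Icc 0 1) :=
  (hf.deriv hU).continuousOn.comp (by fun_prop) fun _ ht ↦ hUc.add_smul_sub_mem hw ht.1 ht.2

theorem integral_deriv_segment_eq_slope {f : ℂ → E} (hU : IsOpen U) (hUc : StarConvex ℝ c U)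
    (hf : DifferentiableOn ℂ f U) (hw : w ∈ U) (hwc : w ≠ c) :
    ∫ t in (0 : ℝ)..1, deriv f (c + t • (w - c)) = slope f c w := by
  have hftc := integral_unitInterval_deriv_eq_sub (continuousOn_deriv_segment hU hUc hf hw)
    fun t ht ↦ (hf.differentiableAt <| hU.mem_nhds <|
      hUc.add_smul_sub_mem hw ht.1 ht.2).hasDerivAt
  rw [slope_def_module, eq_inv_smul_iff₀ (sub_ne_zero.mpr hwc), hftc, add_sub_cancel]

theorem integral_re_deriv_segment_eq_re_slope {f : ℂ → ℂ} (hU : IsOpen U)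
    (hUc : StarConvex ℝ c U) (hf : DifferentiableOn ℂ f U) (hw : w ∈ U) (hwc : w ≠ c) :
    ∫ t in (0 : ℝ)..1, (deriv f (c + t • (w - c))).re = (slope f c w).re := by
  rw [← integral_deriv_segment_eq_slope hU hUc hf hw hwc]
  exact reCLM.intervalIntegral_comp_comm
    ((continuousOn_deriv_segment hU hUc hf hw).intervalIntegrable_of_Icc zero_le_one)

end SegmentMean

section HarnackRatio

open intervalIntegral MeasureTheory Set

variable {R r : ℝ}

theorem intervalIntegrable_sub_mul_div_add_mul (hR : 0 < R) (hr : 0 ≤ r) :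
    IntervalIntegrable (fun t ↦ (R - t * r) / (R + t * r)) volume 0 1 :=
  ContinuousOn.intervalIntegrable_of_Icc zero_le_one <| .div (by fun_prop) (by fun_prop)
    fun _ ht ↦ (add_pos_of_pos_of_nonneg hR (mul_nonneg ht.1 hr)).ne'

theorem hasDerivAt_log_add_mul_sub {t : ℝ} (hr : r ≠ 0) (ht : R + t * r ≠ 0) :
    HasDerivAt (fun t ↦ 2 * (R / r) * Real.log (R + t * r) - t) ((R - t * r) / (R + t * r)) t := by
  have hlog := (((hasDerivAt_id t).mul_const r).const_add R).log ht
  convert! (hlog.const_mul (2 * (R / r))).sub (hasDerivAt_id t) using 1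
  rw [id_eq]
  field_simp
  ring

theorem integral_sub_mul_div_add_mul (hR : 0 < R) (hr : 0 < r) :
    ∫ t in (0 : ℝ)..1, (R - t * r) / (R + t * r) = 2 * (Real.log (1 + r / R) / (r / R)) - 1 := by
  have hderiv : ∀ t ∈ uIcc (0 : ℝ) 1,
      HasDerivAt (fun t ↦ 2 * (R / r) * Real.log (R + t * r) - t)
        ((R - t * r) / (R + t * r)) t := by
    intro t ht
    rw [uIcc_of_le zero_le_one] at ht
    exact hasDerivAt_log_add_mul_sub hr.ne'
      (add_pos_of_pos_of_nonneg hR (mul_nonneg ht.1 hr.le)).ne'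
  have hlog_sub : Real.log (R + r) - Real.log R = Real.log (1 + r / R) := by
    rw [← Real.log_div (by positivity) hR.ne', add_div, div_self hR.ne']
  rw [integral_eq_sub_of_hasDerivAt hderiv (intervalIntegrable_sub_mul_div_add_mul hR hr.le),
    ← hlog_sub]
  simp only [one_mul, zero_mul, add_zero]
  field_simp
  ring

end HarnackRatio

theorem log_two_lt_log_one_add_div {s : ℝ} (hs0 : 0 < s) (hs1 : s < 1) :
    Real.log 2 < Real.log (1 + s) / s := by
  have hconcave := strictConcaveOn_log_Ioi.2 (x := 1) (y := 2) (by simp) (by simp) (by norm_num)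
    (sub_pos.mpr hs1) hs0 (sub_add_cancel 1 s)
  have hpoint : (1 - s) • (1 : ℝ) + s • 2 = 1 + s := by simp only [smul_eq_mul]; ring
  rw [hpoint, Real.log_one, smul_zero, zero_add, smul_eq_mul] at hconcave
  rwa [lt_div_iff₀' hs0]

section Quotient

open MeasureTheory Set

variable {f : ℂ → ℂ} {β R : ℝ} {c w : ℂ}

theorem le_re_quotient_of_forall_le_re_deriv (hf : DifferentiableOn ℂ f (ball c R))
    (hβ : ∀ z ∈ ball c R, β ≤ (deriv f z).re) (hw : w ∈ ball c R) (hwc : w ≠ c) :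
    β + ((deriv f c).re - β) *
        (2 * (Real.log (1 + ‖w - c‖ / R) / (‖w - c‖ / R)) - 1) ≤ ((f w - f c) / (w - c)).re := by
  have hR : 0 < R := pos_of_mem_ball hw
  have hr : 0 < ‖w - c‖ := norm_pos_iff.mpr (sub_ne_zero.mpr hwc)
  have hstar : StarConvex ℝ c (ball c R) := (convex_ball c R).starConvex (mem_ball_self hR)
  have hre_int : IntervalIntegrable (fun t : ℝ ↦ (deriv f (c + t • (w - c))).re) volume 0 1 :=
    (continuous_re.comp_continuousOn (continuousOn_deriv_segment isOpen_ball hstar hf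
      hw)).intervalIntegrable_of_Icc zero_le_one
  have hkernel_int := (intervalIntegrable_sub_mul_div_add_mul hR hr.le).const_mul
    ((deriv f c).re - β)
  have hharnack : ∀ t ∈ Icc (0 : ℝ) 1,
      β + ((deriv f c).re - β) * ((R - t * ‖w - c‖) / (R + t * ‖w - c‖)) ≤
        (deriv f (c + t • (w - c))).re := fun t ht ↦ by
    have hbound := harnack_lower_re (hf.deriv isOpen_ball) hβ
      (hstar.add_smul_sub_mem hw ht.1 ht.2)
    rwa [add_sub_cancel_left, norm_smul, Real.norm_of_nonneg ht.1] at hbound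
  calc β + ((deriv f c).re - β) * (2 * (Real.log (1 + ‖w - c‖ / R) / (‖w - c‖ / R)) - 1)
      = ∫ t in (0 : ℝ)..1,
          (β + ((deriv f c).re - β) * ((R - t * ‖w - c‖) / (R + t * ‖w - c‖))) := by
        rw [intervalIntegral.integral_add intervalIntegrable_const hkernel_int,
          intervalIntegral.integral_const_mul, integral_sub_mul_div_add_mul hR hr,
          intervalIntegral.integral_const, sub_zero, one_smul]
    _ ≤ ∫ t in (0 : ℝ)..1, (deriv f (c + t • (w - c))).re :=
        intervalIntegral.integral_mono_on zero_le_one (intervalIntegrable_const.add hkernel_int)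
          hre_int hharnack
    _ = ((f w - f c) / (w - c)).re := by
        rw [integral_re_deriv_segment_eq_re_slope isOpen_ball hstar hf hw hwc, slope_def_field]

theorem re_quotient_lower_bound_general (hf : DifferentiableOn ℂ f (ball c R))
    (hβ : ∀ z ∈ ball c R, β < (deriv f z).re) (hw : w ∈ ball c R) (hwc : w ≠ c) :
    β + ((deriv f c).re - β) * (2 * Real.log 2 - 1) < ((f w - f c) / (w - c)).re := by
  have hR : 0 < R := pos_of_mem_ball hw
  have hcenter : 0 < (deriv f c).re - β := sub_pos.mpr (hβ c (mem_ball_self hR))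
  have hratio_pos : 0 < ‖w - c‖ / R := div_pos (norm_pos_iff.mpr (sub_ne_zero.mpr hwc)) hR
  have hratio_lt : ‖w - c‖ / R < 1 := (div_lt_one hR).mpr (mem_ball_iff_norm.mp hw)
  calc β + ((deriv f c).re - β) * (2 * Real.log 2 - 1)
      < β + ((deriv f c).re - β) *
          (2 * (Real.log (1 + ‖w - c‖ / R) / (‖w - c‖ / R)) - 1) := by
        gcongr
        exact log_two_lt_log_one_add_div hratio_pos hratio_lt
    _ ≤ ((f w - f c) / (w - c)).re :=
        le_re_quotient_of_forall_le_re_deriv hf (fun z hz ↦ (hβ z hz).le) hw hwc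

end Quotient

/-- Corollary 2: if `f(0) = 0`, `f'(0) = 1` and `Re f'(z) > β` on the unit disk,
then `Re(f(z)/z) > 2(1−β)ln 2 + 2β − 1` on the punctured unit disk. -/
theorem re_quotient_lower_bound (β : ℝ) (hβ0 : 0 ≤ β) (hβ1 : β < 1)
    (f : ℂ → ℂ) (hf : AnalyticOnNhd ℂ f (ball (0 : ℂ) 1))
    (hf0 : f 0 = 0) (hf1 : deriv f 0 = 1)
    (h : ∀ z ∈ ball (0 : ℂ) 1, β < (deriv f z).re) :
    ∀ z ∈ ball (0 : ℂ) 1 \ {0},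
      2 * (1 - β) * Real.log 2 + 2 * β - 1 < (f z / z).re := by
  rintro z ⟨hz, hz0⟩
  have hbound := re_quotient_lower_bound_general hf.differentiableOn h hz hz0
  rw [hf0, hf1, sub_zero, sub_zero, one_re] at hbound
  linarith
end
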